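/- arXiv:1201.2390 — 2 statements merged into one kernel-verified Lean document; each statement's English description precedes it below -/
import Mathlib

section
/- Under the assumptions of the previous setting (f ω-regularly smooth on D with constant h, f'(x₀) = I, g ψ-Lipschitz in the ball sense, ‖f(x₀)+g(x₀)‖ ≤ a, W has a unique zero t₊ in [0,χ], B̄(x₀,t₊) ⊆ D), with u₀ = x₀, u_{n+1} = u_n − (f(u_n)+g(u_n)) and ρ₀ = 0, ρ_{n+1} = ρ_n + W(ρ_n), one has ‖u_m − u_n‖ ≤ |ρ_m − ρ_n| for all m, n; consequently {u_n} is a Cauchy sequence. -/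
/-!
The map `x ↦ x - (f x + g x)` is majorized on the ball of radius `t⋆` by the scalar map
`t ↦ t + W t`: if `‖x' - x₀‖ ≤ p` and `‖x'' - x'‖ ≤ q - p` with `q ≤ t⋆`, the images of `x'` and
`x''` are at distance at most `(q + W q) - (p + W p)`.

For the smooth part, `ω`-regular smoothness relative to `x₀`, where `f' x₀ = I`, gives
`‖f' x - I‖ ≤ ω χ - ω (χ - r)` whenever `‖x - x₀‖ ≤ r ≤ χ` (`norm_fderiv_sub_id_le`; concavity of
`ω` enters here), and this is integrated along the segment from `x'` to `x''`
(`norm_sub_smooth_le`). For the nonsmooth part, the local Lipschitz bounds along the same segment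
add up to `∫ ψ` by repeated bisection (`norm_sub_lipschitz_le`).

On the scalar side, `t + W t` is nondecreasing on `[0, t⋆]` and `W ≥ 0` there, because `W 0 = a > 0`
and `t⋆` is the only zero. Hence `ρ` increases and stays in `[0, t⋆]`, and induction gives
`‖u (n + 1) - u n‖ ≤ ρ (n + 1) - ρ n`. As a bounded monotone sequence, `ρ` is Cauchy, so `u` is too.
-/

/-- Increments of a concave function over steps of length `t` decrease with the starting point. -/
lemma concave_increment_le {ω : ℝ → ℝ} (hω : ConcaveOn ℝ (Set.Ici 0) ω)
    {c s t : ℝ} (hc : 0 ≤ c) (hcs : c ≤ s) (ht : 0 ≤ t) :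
    ω (s + t) - ω s ≤ ω (c + t) - ω c := by
  rcases eq_or_lt_of_le (show 0 ≤ s - c + t by linarith) with hL | hL
  · have h1 : s = c := by linarith
    subst h1; rfl
  · have hL' := hL.ne'
    have hmem : s + t ∈ Set.Ici (0:ℝ) := by simp only [Set.mem_Ici]; linarith
    have e : (s - c) / (s - c + t) + t / (s - c + t) = 1 := by field_simp
    have a1 : 0 ≤ (s - c) / (s - c + t) := div_nonneg (by linarith) hL.le
    have a2 : 0 ≤ t / (s - c + t) := div_nonneg ht hL.le
    have h1 := hω.2 (Set.mem_Ici.2 hc) hmem a1 a2 e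
    have h2 := hω.2 (Set.mem_Ici.2 hc) hmem a2 a1 (by linarith)
    simp only [smul_eq_mul] at h1 h2
    have e1 : (s - c) / (s - c + t) * c + t / (s - c + t) * (s + t) = c + t := by
      field_simp; ring
    have e2 : t / (s - c + t) * c + (s - c) / (s - c + t) * (s + t) = s := by
      field_simp; ring
    rw [e1] at h1
    rw [e2] at h2
    have e3 : (s - c) / (s - c + t) = 1 - t / (s - c + t) := by linarith
    rw [e3] at h1 h2
    linarith

/-- The regular smoothness inequality between `x₀` and `x`, solved for the deviation of `A = f' x`
from the identity. -/
lemma norm_fderiv_sub_id_le {X : Type*} [NormedAddCommGroup X] [NormedSpace ℝ X] [Nontrivial X]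
    {ω ωinv : ℝ → ℝ}
    (hω_mono : StrictMonoOn ω (Set.Ici 0)) (hω_conc : ConcaveOn ℝ (Set.Ici 0) ω)
    (hωinv_right : ∀ s, 0 ≤ s → 0 ≤ ωinv s ∧ ω (ωinv s) = s)
    {h χ r : ℝ} (hh1 : h ≤ 1) (hχ : χ = ωinv (1 - h))
    {A : X →L[ℝ] X} (hA : h ≤ ‖A‖)
    (hreg : ωinv (min ‖ContinuousLinearMap.id ℝ X‖ ‖A‖ - h + ‖A - ContinuousLinearMap.id ℝ X‖)
        - ωinv (min ‖ContinuousLinearMap.id ℝ X‖ ‖A‖ - h) ≤ r)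
    (hr0 : 0 ≤ r) (hr : r ≤ χ) :
    ‖ContinuousLinearMap.id ℝ X - A‖ ≤ ω χ - ω (χ - r) := by
  rw [ContinuousLinearMap.norm_id] at hreg
  rw [norm_sub_rev]
  have htri : 1 ≤ ‖A‖ + ‖A - ContinuousLinearMap.id ℝ X‖ := by
    have := norm_sub_norm_le (ContinuousLinearMap.id ℝ X) A
    rw [ContinuousLinearMap.norm_id, norm_sub_rev] at this
    linarith
  set d := ‖A - ContinuousLinearMap.id ℝ X‖
  have hd : 0 ≤ d := norm_nonneg _
  set m := min 1 ‖A‖ - h with hm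
  have hm0 : 0 ≤ m := sub_nonneg.2 (le_min hh1 hA)
  have hmd : 1 - h ≤ m + d := by
    rcases min_choice 1 ‖A‖ with e | e <;> rw [hm, e] <;> linarith
  obtain ⟨s0, hs⟩ := hωinv_right m hm0
  obtain ⟨v0, hv⟩ := hωinv_right (m + d) (by linarith)
  obtain ⟨c0, hc⟩ := hωinv_right (1 - h) (by linarith)
  rw [← hχ] at c0 hc
  have hle : m + d ≤ ω (ωinv m + r) := by
    rw [← hv]
    exact hω_mono.monotoneOn v0 (add_nonneg s0 hr0) (by linarith)
  by_cases hcase : χ - r ≤ ωinv m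
  · have := concave_increment_le hω_conc (sub_nonneg.2 hr) hcase hr0
    rw [sub_add_cancel, hs] at this
    linarith
  · exfalso
    have := hω_mono (add_nonneg s0 hr0) c0 (show ωinv m + r < χ by linarith)
    linarith

/-- Points of the segment from `x'` to `x''` are dominated by the segment from `p` to `q`. -/
lemma norm_segment_sub_le {X : Type*} [NormedAddCommGroup X] [NormedSpace ℝ X] {x₀ x' x'' : X}
    {p q s : ℝ} (hx' : ‖x' - x₀‖ ≤ p) (hx'' : ‖x'' - x'‖ ≤ q - p) (hs : 0 ≤ s) :
    ‖x' + s • (x'' - x') - x₀‖ ≤ p + s * (q - p) := by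
  have : x' + s • (x'' - x') - x₀ = (x' - x₀) + s • (x'' - x') := by abel
  rw [this]
  refine (norm_add_le _ _).trans (add_le_add hx' ?_)
  rw [norm_smul, Real.norm_of_nonneg hs]
  exact mul_le_mul_of_nonneg_left hx'' hs

/-- Mean value estimate for `x ↦ x - f x`, whose derivative is bounded at distance `r` from `x₀`
by `κ r`, with `K` an antiderivative of `κ`. -/
lemma norm_sub_smooth_le {X : Type*} [NormedAddCommGroup X] [NormedSpace ℝ X]
    {D : Set X} {x₀ x' x'' : X} {f : X → X} {f' : X → X →L[ℝ] X}
    (hf : ∀ x ∈ D, HasFDerivWithinAt f (f' x) D x)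
    {K κ : ℝ → ℝ} (hK : ∀ r, HasDerivAt K (κ r) r) {p q R : ℝ} (hp : 0 ≤ p) (hpq : p ≤ q)
    (hq : q ≤ R)
    (hball : Metric.closedBall x₀ R ⊆ D)
    (hbound : ∀ x ∈ D, ∀ r, 0 ≤ r → r ≤ R → ‖x - x₀‖ ≤ r →
      ‖ContinuousLinearMap.id ℝ X - f' x‖ ≤ κ r)
    (hx' : ‖x' - x₀‖ ≤ p) (hx'' : ‖x'' - x'‖ ≤ q - p) :
    ‖(x'' - f x'') - (x' - f x')‖ ≤ K q - K p := by
  have hr : ∀ s ∈ Set.Icc (0:ℝ) 1, p + s * (q - p) ≤ R := fun s hs => by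
    nlinarith [hs.1, hs.2]
  have hmem : ∀ s ∈ Set.Icc (0:ℝ) 1, x' + s • (x'' - x') ∈ D := fun s hs => by
    apply hball
    rw [mem_closedBall_iff_norm]
    exact (norm_segment_sub_le hx' hx'' hs.1).trans (hr s hs)
  have hline : ∀ s : ℝ, HasDerivAt (fun s : ℝ => x' + s • (x'' - x')) (x'' - x') s := fun s => by
    simpa using ((hasDerivAt_id s).smul_const (x'' - x')).const_add x'
  have hG : ∀ s ∈ Set.Icc (0:ℝ) 1, HasDerivWithinAt
      (fun s : ℝ => (x' + s • (x'' - x') - f (x' + s • (x'' - x'))) - (x' - f x'))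
      ((x'' - x') - f' (x' + s • (x'' - x')) (x'' - x')) (Set.Icc 0 1) s := fun s hs => by
    have h1 := (hf _ (hmem s hs)).comp_hasDerivWithinAt s
      ((hline s).hasDerivWithinAt (s := Set.Icc 0 1)) (fun y hy => hmem y hy)
    exact ((hline s).hasDerivWithinAt.sub h1).sub_const _
  have hB : ∀ s : ℝ, HasDerivAt (fun s => K (p + s * (q - p)) - K p)
      (κ (p + s * (q - p)) * (q - p)) s := fun s => by
    have h1 : HasDerivAt (fun s : ℝ => p + s * (q - p)) (q - p) s := by
      simpa using ((hasDerivAt_id s).mul_const (q - p)).const_add p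
    exact ((hK _).comp s h1).sub_const _
  have key := image_norm_le_of_norm_deriv_right_le_deriv_boundary' (a := (0:ℝ)) (b := 1)
    (fun s hs => (hG s hs).continuousWithinAt)
    (fun s hs => (hG s ⟨hs.1, hs.2.le⟩).mono_of_mem_nhdsWithin
      (Icc_mem_nhdsGE_of_mem hs))
    (B := fun s => K (p + s * (q - p)) - K p)
    (B' := fun s => κ (p + s * (q - p)) * (q - p))
    (by simp) (fun s _ => (hB s).continuousAt.continuousWithinAt)
    (fun s _ => (hB s).hasDerivWithinAt)
    (fun s hs => by
      have hs' : s ∈ Set.Icc (0:ℝ) 1 := ⟨hs.1, hs.2.le⟩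
      have h2 := hbound _ (hmem s hs') (p + s * (q - p))
        (add_nonneg hp (mul_nonneg hs.1 (by linarith))) (hr s hs')
        (norm_segment_sub_le hx' hx'' hs.1)
      have h3 := ContinuousLinearMap.le_opNorm
        (ContinuousLinearMap.id ℝ X - f' (x' + s • (x'' - x'))) (x'' - x')
      refine (le_trans (by simpa using h3) (mul_le_mul h2 hx'' (norm_nonneg _)
        ((norm_nonneg _).trans h2))))
    (x := 1) (by simp)
  simpa using key

/-- Local Lipschitz bounds with constant `ψ t` on the ball of radius `t` integrate to `∫ ψ`. The
crude bound `ψ q * (q - p)` exceeds `∫ ψ` by at most `(q - p) * (ψ q - ψ p)`, and each bisection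
halves this error. -/
lemma norm_sub_lipschitz_le {X : Type*} [NormedAddCommGroup X] [NormedSpace ℝ X]
    {x₀ : X} {g : X → X} {ψ : ℝ → ℝ} {R : ℝ}
    (hψ_mono : MonotoneOn ψ (Set.Ici 0)) (hψ_nonneg : ∀ t, 0 ≤ t → 0 ≤ ψ t)
    (hg : ∀ t, 0 ≤ t → t ≤ R →
      ∀ x' ∈ Metric.closedBall x₀ t, ∀ x'' ∈ Metric.closedBall x₀ t,
        ‖g x'' - g x'‖ ≤ ψ t * ‖x'' - x'‖)
    {p q : ℝ} (hp : 0 ≤ p) (hpq : p ≤ q) (hq : q ≤ R) {x' x'' : X}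
    (hx' : ‖x' - x₀‖ ≤ p) (hx'' : ‖x'' - x'‖ ≤ q - p) :
    ‖g x'' - g x'‖ ≤ ∫ τ in p..q, ψ τ := by
  have hint : ∀ p q, 0 ≤ p → p ≤ q → IntervalIntegrable ψ MeasureTheory.volume p q :=
    fun p q hp hpq => MonotoneOn.intervalIntegrable
      (hψ_mono.mono (by rw [Set.uIcc_of_le hpq]; exact fun z hz => hp.trans hz.1))
  have key : ∀ (n : ℕ) (p q : ℝ), 0 ≤ p → p ≤ q → q ≤ R → ∀ x' x'' : X, ‖x' - x₀‖ ≤ p →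
      ‖x'' - x'‖ ≤ q - p →
      ‖g x'' - g x'‖ ≤ (∫ τ in p..q, ψ τ) + (q - p) * (ψ q - ψ p) * (1 / 2) ^ n := by
    intro n
    induction n with
    | zero =>
      intro p q hp hpq hq x' x'' hx' hx''
      have h1 : ‖g x'' - g x'‖ ≤ ψ q * ‖x'' - x'‖ := by
        refine hg q (hp.trans hpq) hq x' ?_ x'' ?_ <;> rw [mem_closedBall_iff_norm]
        · linarith
        · have : x'' - x₀ = (x'' - x') + (x' - x₀) := by abel
          rw [this]
          exact (norm_add_le _ _).trans (by linarith)
      have h2 := mul_le_mul_of_nonneg_left hx'' (hψ_nonneg q (hp.trans hpq))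
      have h3 : (∫ _ in p..q, ψ p) ≤ ∫ τ in p..q, ψ τ :=
        intervalIntegral.integral_mono_on hpq intervalIntegrable_const (hint p q hp hpq)
          (fun z hz => hψ_mono hp (hp.trans hz.1) hz.1)
      rw [intervalIntegral.integral_const, smul_eq_mul] at h3
      rw [pow_zero, mul_one]
      linarith
    | succ n ih =>
      intro p q hp hpq hq x' x'' hx' hx''
      obtain ⟨m, hm⟩ : ∃ m, m = (p + q) / 2 := ⟨_, rfl⟩
      obtain ⟨y, hy⟩ : ∃ y, y = x' + (1 / 2 : ℝ) • (x'' - x') := ⟨_, rfl⟩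
      have hhalf : ‖(1 / 2 : ℝ) • (x'' - x')‖ ≤ (q - p) / 2 := by
        rw [norm_smul, Real.norm_of_nonneg (by norm_num)]
        linarith
      have hy1 : ‖y - x'‖ ≤ m - p := by
        have : y - x' = (1 / 2 : ℝ) • (x'' - x') := by rw [hy]; abel
        rw [this]; linarith
      have hy2 : ‖x'' - y‖ ≤ q - m := by
        have : x'' - y = (1 / 2 : ℝ) • (x'' - x') := by rw [hy]; module
        rw [this]; linarith
      have hy0 : ‖y - x₀‖ ≤ m := by
        have := norm_segment_sub_le hx' hx'' (show (0:ℝ) ≤ 1 / 2 by norm_num)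
        rw [← hy] at this
        linarith
      have i1 := ih p m hp (by linarith) (by linarith) x' y hx' hy1
      have i2 := ih m q (by linarith) (by linarith) hq y x'' hy0 hy2
      have hadd := intervalIntegral.integral_add_adjacent_intervals
        (hint p m hp (by linarith)) (hint m q (by linarith) (by linarith))
      have htri : ‖g x'' - g x'‖ ≤ ‖g x'' - g y‖ + ‖g y - g x'‖ :=
        norm_sub_le_norm_sub_add_norm_sub _ _ _
      have e1 : m - p = (q - p) / 2 := by linarith
      have e2 : q - m = (q - p) / 2 := by linarith
      rw [e1] at i1
      rw [e2] at i2
      rw [← hadd, pow_succ]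
      refine (htri.trans (add_le_add i2 i1)).trans (le_of_eq ?_)
      ring
  refine ge_of_tendsto' (x := Filter.atTop) (f := fun n : ℕ =>
    (∫ τ in p..q, ψ τ) + (q - p) * (ψ q - ψ p) * (1 / 2) ^ n) ?_
    (fun n => key n p q hp hpq hq x' x'' hx' hx'')
  have := (tendsto_pow_atTop_nhds_zero_of_lt_one (r := (1 / 2 : ℝ)) (by norm_num)
    (by norm_num)).const_mul ((q - p) * (ψ q - ψ p))
  simpa using this.const_add (∫ τ in p..q, ψ τ)

/-- For the simplified iteration `u₀ = x₀`, `u_{n+1} = u_n - (f(u_n) + g(u_n))`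
and the scalar sequence `ρ₀ = 0`, `ρ_{n+1} = ρ_n + W(ρ_n)`, one has
`‖u_m - u_n‖ ≤ |ρ_m - ρ_n|` for all `m, n`; consequently `{u_n}` is a Cauchy sequence. -/
theorem simplified_iteration_cauchy
    {X : Type*} [NormedAddCommGroup X] [NormedSpace ℝ X] [CompleteSpace X]
    (D : Set X) (hD : Convex ℝ D) (x₀ : X) (hx₀ : x₀ ∈ D)
    (f g : X → X) (f' : X → X →L[ℝ] X)
    (hf : ∀ x ∈ D, HasFDerivWithinAt f (f' x) D x)
    (hfx₀ : f' x₀ = ContinuousLinearMap.id ℝ X)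
    (ω ωinv ψ : ℝ → ℝ)
    (hω_cont : ContinuousOn ω (Set.Ici 0))
    (hω_mono : StrictMonoOn ω (Set.Ici 0))
    (hω_conc : ConcaveOn ℝ (Set.Ici 0) ω)
    (hω0 : ω 0 = 0)
    (hω_nonneg : ∀ t, 0 ≤ t → 0 ≤ ω t)
    (hωinv_left : ∀ t, 0 ≤ t → ωinv (ω t) = t)
    (hωinv_right : ∀ s, 0 ≤ s → 0 ≤ ωinv s ∧ ω (ωinv s) = s)
    (h : ℝ) (hh0 : 0 ≤ h) (hh1 : h ≤ 1) (hhf : ∀ x ∈ D, h ≤ ‖f' x‖)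
    (hreg : ∀ x' ∈ D, ∀ x'' ∈ D,
      ωinv (min ‖f' x'‖ ‖f' x''‖ - h + ‖f' x'' - f' x'‖)
        - ωinv (min ‖f' x'‖ ‖f' x''‖ - h) ≤ ‖x'' - x'‖)
    (hψ_mono : MonotoneOn ψ (Set.Ici 0))
    (hψ_nonneg : ∀ t, 0 ≤ t → 0 ≤ ψ t)
    (hg : ∀ t, 0 ≤ t → Metric.closedBall x₀ t ⊆ D →
      ∀ x' ∈ Metric.closedBall x₀ t, ∀ x'' ∈ Metric.closedBall x₀ t,
        ‖g x'' - g x'‖ ≤ ψ t * ‖x'' - x'‖)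
    (a : ℝ) (ha_pos : 0 < a) (ha : ‖f x₀ + g x₀‖ ≤ a)
    (χ : ℝ) (hχdef : χ = ωinv (1 - h))
    (Ω Ψ W : ℝ → ℝ)
    (hΩ : ∀ t, Ω t = ∫ τ in (0:ℝ)..t, ω τ)
    (hΨ : ∀ t, Ψ t = ∫ τ in (0:ℝ)..t, ψ τ)
    (hW : ∀ t, W t = a - Ω χ + Ω (χ - t) - t * h + Ψ t)
    (tstar : ℝ) (htstar_mem : tstar ∈ Set.Icc 0 χ) (htstar_zero : W tstar = 0)
    (htstar_uniq : ∀ s ∈ Set.Icc 0 χ, W s = 0 → s = tstar)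
    (hball : Metric.closedBall x₀ tstar ⊆ D)
    (u : ℕ → X) (hu0 : u 0 = x₀)
    (hurec : ∀ n, u (n + 1) = u n - (f (u n) + g (u n)))
    (ρ : ℕ → ℝ) (hρ0 : ρ 0 = 0)
    (hρrec : ∀ n, ρ (n + 1) = ρ n + W (ρ n)) :
    (∀ m n, ‖u m - u n‖ ≤ |ρ m - ρ n|) ∧ CauchySeq u := by
  -- The regular smoothness estimate needs `‖I‖ = 1`, so the zero space is treated apart.
  rcases subsingleton_or_nontrivial X with hX | hX
  · have hu : u = fun _ => 0 := funext fun n => Subsingleton.elim _ _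
    subst hu
    exact ⟨fun m n => by simp, cauchySeq_const 0⟩
  obtain ⟨hχ0, hωχ⟩ := hωinv_right (1 - h) (by linarith)
  rw [← hχdef] at hχ0 hωχ
  -- `ω₁` extends `ω` from `[0, ∞)` to a continuous function on the line, so that the
  -- antiderivative `K` of `r ↦ ω χ - ω (χ - r)` is differentiable everywhere.
  obtain ⟨ω₁, hω₁⟩ : ∃ ω₁ : ℝ → ℝ, ω₁ = fun t => ω (max t 0) := ⟨_, rfl⟩
  have hω₁c : Continuous ω₁ := by
    rw [hω₁]
    exact hω_cont.comp_continuous (by fun_prop) (fun t => Set.mem_Ici.2 (le_max_right _ _))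
  have hω₁e : ∀ t, 0 ≤ t → ω₁ t = ω t := fun t ht => by rw [hω₁]; simp only [max_eq_left ht]
  have hΩ₁ : ∀ t, 0 ≤ t → Ω t = ∫ τ in (0:ℝ)..t, ω₁ τ := fun t ht => by
    rw [hΩ]
    refine intervalIntegral.integral_congr fun z hz => ?_
    rw [Set.uIcc_of_le ht] at hz
    exact (hω₁e z hz.1).symm
  obtain ⟨K, hKdef⟩ : ∃ K : ℝ → ℝ,
      K = fun r => ω χ * r + ∫ τ in (0:ℝ)..(χ - r), ω₁ τ := ⟨_, rfl⟩
  have hK : ∀ r, HasDerivAt K (ω χ - ω₁ (χ - r)) r := fun r => by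
    have h1 : HasDerivAt (fun t => ∫ τ in (0:ℝ)..t, ω₁ τ) (ω₁ (χ - r)) (χ - r) :=
      hω₁c.integral_hasStrictDerivAt 0 (χ - r) |>.hasDerivAt
    have h2 := h1.comp r ((hasDerivAt_id r).const_sub χ)
    have h3 := ((hasDerivAt_id r).const_mul (ω χ)).add h2
    rw [hKdef]
    exact h3.congr_deriv (by ring)
  have hWK : ∀ t ∈ Set.Icc 0 χ, t + W t = a - Ω χ + K t + Ψ t := fun t ht => by
    rw [hW, hKdef, hΩ₁ (χ - t) (sub_nonneg.2 ht.2), hωχ]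
    ring
  obtain ⟨hts0, htsχ⟩ := htstar_mem
  have hΨint : ∀ p q, 0 ≤ p → p ≤ q → IntervalIntegrable ψ MeasureTheory.volume p q :=
    fun p q hp hpq => MonotoneOn.intervalIntegrable
      (hψ_mono.mono (by rw [Set.uIcc_of_le hpq]; exact fun z hz => hp.trans hz.1))
  have hΨsub : ∀ p q, 0 ≤ p → p ≤ q → Ψ q - Ψ p = ∫ τ in p..q, ψ τ := fun p q hp hpq => by
    rw [hΨ, hΨ]
    exact intervalIntegral.integral_interval_sub_left (hΨint 0 q le_rfl (hp.trans hpq))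
      (hΨint 0 p le_rfl hp)
  have hbound : ∀ x ∈ D, ∀ r, 0 ≤ r → r ≤ tstar → ‖x - x₀‖ ≤ r →
      ‖ContinuousLinearMap.id ℝ X - f' x‖ ≤ ω χ - ω₁ (χ - r) := by
    intro x hx r hr0 hr hxr
    have h1 := hreg x₀ hx₀ x hx
    rw [hfx₀] at h1
    rw [hω₁e _ (by linarith)]
    exact norm_fderiv_sub_id_le hω_mono hω_conc hωinv_right hh1 hχdef (hhf x hx)
      (h1.trans hxr) hr0 (hr.trans htsχ)
  have hmajor : ∀ p q, 0 ≤ p → p ≤ q → q ≤ tstar → ∀ x' x'' : X, ‖x' - x₀‖ ≤ p →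
      ‖x'' - x'‖ ≤ q - p →
      ‖(x'' - (f x'' + g x'')) - (x' - (f x' + g x'))‖ ≤ (q + W q) - (p + W p) := by
    intro p q hp hpq hq x' x'' hx' hx''
    have h1 := norm_sub_smooth_le hf hK hp hpq hq hball hbound hx' hx''
    have h2 := norm_sub_lipschitz_le hψ_mono hψ_nonneg (R := tstar)
      (fun t ht0 ht => hg t ht0 ((Metric.closedBall_subset_closedBall ht).trans hball))
      hp hpq hq hx' hx''
    rw [← hΨsub p q hp hpq] at h2
    rw [hWK q ⟨hp.trans hpq, hq.trans htsχ⟩, hWK p ⟨hp, (hpq.trans hq).trans htsχ⟩]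
    have e : (x'' - (f x'' + g x'')) - (x' - (f x' + g x'))
        = ((x'' - f x'') - (x' - f x')) - (g x'' - g x') := by abel
    rw [e]
    exact (norm_sub_le _ _).trans (by linarith)
  -- Monotonicity of `t + W t` is the majorant inequality at the coincident points `x' = x'' = x₀`.
  have hmono : ∀ p q, 0 ≤ p → p ≤ q → q ≤ tstar → p + W p ≤ q + W q := by
    intro p q hp hpq hq
    have := hmajor p q hp hpq hq x₀ x₀ (by simpa using hp) (by simpa using hpq)
    have h0 := norm_nonneg ((x₀ - (f x₀ + g x₀)) - (x₀ - (f x₀ + g x₀)))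
    linarith
  have hW0 : W 0 = a := by
    rw [hW, hΨ]; simp
  have hWcont : ContinuousOn W (Set.Icc 0 χ) := by
    have hKc : Continuous K := continuous_iff_continuousAt.2 fun r => (hK r).continuousAt
    have hΨc : ContinuousOn Ψ (Set.Icc 0 χ) := by
      have h1 := intervalIntegral.continuousOn_primitive_interval
        ((intervalIntegrable_iff_integrableOn_Icc_of_le hχ0).1 (hΨint 0 χ le_rfl hχ0) |>.mono_set
          (Set.uIcc_of_le hχ0).le)
      rw [Set.uIcc_of_le hχ0] at h1
      exact h1.congr fun t _ => hΨ t
    have h2 : ContinuousOn (fun t => a - Ω χ + K t + Ψ t - t) (Set.Icc 0 χ) :=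
      ((continuousOn_const.add hKc.continuousOn).add hΨc).sub continuousOn_id
    refine h2.congr fun t ht => ?_
    have := hWK t ht
    simp only
    linarith
  have hWnonneg : ∀ s, 0 ≤ s → s ≤ tstar → 0 ≤ W s := by
    intro s hs0 hs
    by_contra hneg
    push Not at hneg
    obtain ⟨z, hz, hz0⟩ := intermediate_value_Icc' hs0
      (hWcont.mono (Set.Icc_subset_Icc_right (hs.trans htsχ)))
      (show (0:ℝ) ∈ Set.Icc (W s) (W 0) from ⟨hneg.le, by rw [hW0]; exact ha_pos.le⟩)
    have hzt := htstar_uniq z ⟨hz.1, hz.2.trans (hs.trans htsχ)⟩ hz0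
    have : s = tstar := le_antisymm hs (hzt ▸ hz.2)
    rw [this, htstar_zero] at hneg
    exact lt_irrefl _ hneg
  have hρ : ∀ n, 0 ≤ ρ n ∧ ρ n ≤ tstar := by
    intro n
    induction n with
    | zero => rw [hρ0]; exact ⟨le_rfl, hts0⟩
    | succ n ih =>
      have h1 := hWnonneg _ ih.1 ih.2
      have h2 := hmono _ _ ih.1 ih.2 le_rfl
      rw [hρrec]
      exact ⟨by linarith, by linarith⟩
  have hρmono : Monotone ρ := monotone_nat_of_le_succ fun n => by
    rw [hρrec]
    linarith [hWnonneg _ (hρ n).1 (hρ n).2]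
  have hstep : ∀ n, ‖u n - x₀‖ ≤ ρ n ∧ ‖u (n + 1) - u n‖ ≤ ρ (n + 1) - ρ n := by
    intro n
    induction n with
    | zero =>
      rw [hurec, hρrec, hρ0, hu0, hW0]
      refine ⟨by simp, ?_⟩
      rw [sub_sub_cancel_left, norm_neg]
      linarith
    | succ n ih =>
      have h1 := hmajor _ _ (hρ n).1 (hρmono n.le_succ) (hρ (n + 1)).2 (u n) (u (n + 1))
        ih.1 ih.2
      rw [← hurec, ← hurec, ← hρrec, ← hρrec] at h1
      refine ⟨?_, h1⟩
      have : u (n + 1) - x₀ = (u (n + 1) - u n) + (u n - x₀) := by abel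
      rw [this]
      exact (norm_add_le _ _).trans (by linarith [ih.1, ih.2])
  have hle : ∀ m n, m ≤ n → ‖u n - u m‖ ≤ ρ n - ρ m := by
    intro m n hmn
    induction n, hmn using Nat.le_induction with
    | base => simp
    | succ n _ ih =>
      have h1 := norm_sub_le_norm_sub_add_norm_sub (u (n + 1)) (u n) (u m)
      linarith [(hstep n).2]
  have hall : ∀ m n, ‖u m - u n‖ ≤ |ρ m - ρ n| := by
    intro m n
    rcases le_total m n with hmn | hmn
    · rw [norm_sub_rev, abs_sub_comm]
      exact (hle m n hmn).trans (le_abs_self _)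
    · exact (hle n m hmn).trans (le_abs_self _)
  refine ⟨hall, ?_⟩
  have hρc : CauchySeq ρ :=
    (tendsto_atTop_ciSup hρmono ⟨tstar, by rintro _ ⟨n, rfl⟩; exact (hρ n).2⟩).cauchySeq
  rw [Metric.cauchySeq_iff] at hρc ⊢
  intro ε hε
  obtain ⟨N, hN⟩ := hρc ε hε
  refine ⟨N, fun m hm n hn => ?_⟩
  rw [dist_eq_norm]
  exact (hall m n).trans_lt (by simpa [Real.dist_eq] using hN m hm n hn)
end

section
/- Let f be ω-regularly smooth on D with constant h and f'(x₀) = I, let g satisfy ‖g(x'') − g(x')‖ ≤ ψ(t)‖x'' − x'‖ for all x', x'' ∈ B̄(x₀, t) ⊆ D with ψ nondecreasing, let ‖f(x₀) + g(x₀)‖ ≤ a, suppose the function W(t) = Φ_h(t) + Ψ(t) has a unique zero t₊ in the interval [0, χ], and suppose the closed ball B̄(x₀, t₊) is contained in D. Then the equation f(x) + g(x) = 0 has at most one solution in B̄(x₀, t₊); moreover any solution x₊₊ ∈ B̄(x₀, t₊) satisfies ‖x₊₊ − u_n‖ ≤ t₊ − ρ_n for all n, where u₀ = x₀, u_{n+1}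 = u_n − (f(u_n) + g(u_n)) and ρ₀ = 0, ρ_{n+1} = ρ_n + W(ρ_n). -/
/-!
The map `T x = x - (f x + g x)` is majorized by the scalar map `t ↦ t + W t`. Indeed, with
`lam t = 1 - h - ω (χ - t) + ψ t`, regular smoothness gives `‖f' x - I‖ ≤ 1 - h - ω (χ - t)` on
the ball of radius `t` (`norm_deriv_sub_id_le`), so `T` is `lam t`-Lipschitz there, while
`t + W t = a + ∫₀ᵗ lam`. Since `lam` is nondecreasing, the local Lipschitz bounds integrate to
`‖T y - T x‖ ≤ ∫ᵣˢ lam` whenever `‖x - x₀‖ ≤ r` and `‖y - x‖ ≤ s - r`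
(`norm_sub_le_integral`).

Hence `‖u n - x₀‖ ≤ ρ n`, and comparing a fixed point `xss` of `T` with the fixed point `tstar` of
the majorant gives `‖xss - u n‖ ≤ tstar - ρ n` by induction (`majorant_bounds`). The sequence `ρ`
is nondecreasing and bounded, so it converges to a zero of `W`, which can only be `tstar`; therefore
`u` converges to every solution in the ball, and there is at most one.
-/

open Set Filter Topology

/-- Increments of a concave function over intervals of fixed length decrease. -/
lemma concave_increment_le_s11 {ω : ℝ → ℝ} (hω : ConcaveOn ℝ (Ici 0) ω) {p q t : ℝ}
    (hp : 0 ≤ p) (hpq : p ≤ q) (ht : 0 ≤ t) : ω (q + t) - ω q ≤ ω (p + t) - ω p := by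
  rcases eq_or_lt_of_le (show 0 ≤ q + t - p by linarith) with h0 | h0
  · have h1 : q = p := by linarith
    rw [h1]
  -- `p + t` and `q` are complementary convex combinations of `p` and `q + t`
  set w := t / (q + t - p) with hw
  have hw0 : 0 ≤ w := by positivity
  have hw1 : 0 ≤ 1 - w := by
    rw [hw, sub_nonneg, div_le_one h0]; linarith
  have hwt : w * (q + t - p) = t := by rw [hw]; field_simp
  have hpm : p ∈ Ici (0:ℝ) := hp
  have hqm : q + t ∈ Ici (0:ℝ) := by simp only [mem_Ici]; linarith
  have e1 := hω.2 hpm hqm hw1 hw0 (by ring)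
  have e2 := hω.2 hpm hqm hw0 hw1 (by ring)
  simp only [smul_eq_mul] at e1 e2
  rw [show (1 - w) * p + w * (q + t) = p + t by linear_combination hwt] at e1
  rw [show w * p + (1 - w) * (q + t) = q by linear_combination -hwt] at e2
  linarith

/-- Local Lipschitz bounds `lam t` on the balls of radius `t` integrate along a segment. No
differentiability of `F` is used: the segment is repeatedly bisected, and each bisection halves the
error of the upper Riemann sum of the monotone function `lam`. -/
lemma norm_sub_le_integral {X : Type*} [NormedAddCommGroup X] [NormedSpace ℝ X] {x₀ : X}
    {F : X → X} {lam : ℝ → ℝ} {R : ℝ} (hmono : MonotoneOn lam (Icc 0 R))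
    (hnn : ∀ t ∈ Icc 0 R, 0 ≤ lam t)
    (hF : ∀ t ∈ Icc 0 R, ∀ x ∈ Metric.closedBall x₀ t, ∀ y ∈ Metric.closedBall x₀ t,
      ‖F y - F x‖ ≤ lam t * ‖y - x‖)
    {r s : ℝ} (hr : 0 ≤ r) (hrs : r ≤ s) (hs : s ≤ R) {x y : X} (hx : ‖x - x₀‖ ≤ r)
    (hxy : ‖y - x‖ ≤ s - r) : ‖F y - F x‖ ≤ ∫ τ in r..s, lam τ := by
  have hint : ∀ p q : ℝ, 0 ≤ p → p ≤ q → q ≤ R → IntervalIntegrable lam MeasureTheory.volume p q := by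
    intro p q hp hpq hq
    apply MonotoneOn.intervalIntegrable
    rw [uIcc_of_le hpq]
    exact hmono.mono (Icc_subset_Icc hp hq)
  have key : ∀ n : ℕ, ∀ r s : ℝ, ∀ x y : X, 0 ≤ r → r ≤ s → s ≤ R → ‖x - x₀‖ ≤ r →
      ‖y - x‖ ≤ s - r →
      ‖F y - F x‖ ≤ (∫ τ in r..s, lam τ) + (lam s - lam r) * (s - r) * (1 / 2) ^ n := by
    intro n
    induction n with
    | zero =>
      intro r s x y hr hrs hs hx hxy
      have hy : ‖y - x₀‖ ≤ s := by
        have := norm_add_le (y - x) (x - x₀)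
        rw [sub_add_sub_cancel] at this
        linarith
      have h1 := hF s ⟨hr.trans hrs, hs⟩ x (mem_closedBall_iff_norm.2 (hx.trans hrs)) y
        (mem_closedBall_iff_norm.2 hy)
      have h2 : lam s * ‖y - x‖ ≤ lam s * (s - r) :=
        mul_le_mul_of_nonneg_left hxy (hnn s ⟨hr.trans hrs, hs⟩)
      have h3 : lam r * (s - r) ≤ ∫ τ in r..s, lam τ := by
        have := intervalIntegral.integral_mono_on (f := fun _ => lam r) hrs
          intervalIntegrable_const (hint r s hr hrs hs)
          (fun τ hτ => hmono ⟨hr, hrs.trans hs⟩ ⟨hr.trans hτ.1, hτ.2.trans hs⟩ hτ.1)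
        simp only [intervalIntegral.integral_const, smul_eq_mul] at this
        linarith
      simp only [pow_zero, mul_one]
      linarith
    | succ n ih =>
      intro r s x y hr hrs hs hx hxy
      have hrm : r ≤ (r + s) / 2 := by linarith
      have hms : (r + s) / 2 ≤ s := by linarith
      have e1 : (x + (1 / 2 : ℝ) • (y - x)) - x = (1 / 2 : ℝ) • (y - x) := by abel
      have e2 : y - (x + (1 / 2 : ℝ) • (y - x)) = (1 / 2 : ℝ) • (y - x) := by module
      have hn : ‖(1 / 2 : ℝ) • (y - x)‖ ≤ (s - r) / 2 := by
        rw [norm_smul, Real.norm_of_nonneg (by norm_num)]; linarith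
      have hz : ‖(x + (1 / 2 : ℝ) • (y - x)) - x₀‖ ≤ (r + s) / 2 := by
        have := norm_add_le ((x + (1 / 2 : ℝ) • (y - x)) - x) (x - x₀)
        rw [sub_add_sub_cancel, e1] at this
        linarith
      have i1 := ih r ((r + s) / 2) x (x + (1 / 2 : ℝ) • (y - x)) hr hrm (hms.trans hs) hx
        (by rw [e1]; linarith)
      have i2 := ih ((r + s) / 2) s (x + (1 / 2 : ℝ) • (y - x)) y (hr.trans hrm) hms hs hz
        (by rw [e2]; linarith)
      have i3 := intervalIntegral.integral_add_adjacent_intervals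
        (hint r _ hr hrm (hms.trans hs)) (hint _ s (hr.trans hrm) hms hs)
      have i4 := norm_add_le (F y - F (x + (1 / 2 : ℝ) • (y - x)))
        (F (x + (1 / 2 : ℝ) • (y - x)) - F x)
      rw [sub_add_sub_cancel] at i4
      have i5 : (lam s - lam r) * (s - r) * (1 / 2) ^ (n + 1) =
          (lam ((r + s) / 2) - lam r) * ((r + s) / 2 - r) * (1 / 2) ^ n +
          (lam s - lam ((r + s) / 2)) * (s - (r + s) / 2) * (1 / 2) ^ n := by
        rw [pow_succ]; ring
      linarith
  have hlim : Tendsto (fun n : ℕ => (∫ τ in r..s, lam τ) + (lam s - lam r) * (s - r) * (1 / 2) ^ n)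
      atTop (𝓝 ((∫ τ in r..s, lam τ) + (lam s - lam r) * (s - r) * 0)) :=
    ((tendsto_pow_atTop_nhds_zero_of_lt_one (by norm_num) (by norm_num)).const_mul _).const_add _
  rw [mul_zero, add_zero] at hlim
  exact ge_of_tendsto' hlim fun n => key n r s x y hr hrs hs hx hxy

/-- The regular smoothness condition `hreg` between the derivatives `I` and `A` at two points at
distance at most `t` bounds `‖A - I‖`. When `X` is nontrivial, `1 ≤ ‖A‖ + ‖A - I‖` shows that
`ωinv (min 1 ‖A‖ - h) ≥ χ - t`, and by concavity the increment of `ω` over an interval of length `t`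
starting there is at most the increment `1 - h - ω (χ - t)` over `[χ - t, χ]`. -/
lemma norm_deriv_sub_id_le {X : Type*} [NormedAddCommGroup X] [NormedSpace ℝ X]
    {A : X →L[ℝ] X} {ω ωinv : ℝ → ℝ}
    (hω_mono : StrictMonoOn ω (Ici 0)) (hω_conc : ConcaveOn ℝ (Ici 0) ω)
    (hωinv_right : ∀ s, 0 ≤ s → 0 ≤ ωinv s ∧ ω (ωinv s) = s)
    {h χ t : ℝ} (hh1 : h ≤ 1) (hA : h ≤ ‖A‖) (hχ : χ = ωinv (1 - h)) (ht : 0 ≤ t) (htχ : t ≤ χ)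
    (hreg : ωinv (min ‖ContinuousLinearMap.id ℝ X‖ ‖A‖ - h + ‖A - ContinuousLinearMap.id ℝ X‖)
        - ωinv (min ‖ContinuousLinearMap.id ℝ X‖ ‖A‖ - h) ≤ t) :
    ‖A - ContinuousLinearMap.id ℝ X‖ ≤ 1 - h - ω (χ - t) := by
  obtain ⟨hχ0, hωχ⟩ := hωinv_right (1 - h) (by linarith)
  rw [← hχ] at hχ0 hωχ
  have hmono := hω_mono.monotoneOn
  rcases subsingleton_or_nontrivial X with hX | hX
  · have h0 : A - ContinuousLinearMap.id ℝ X = 0 := Subsingleton.elim _ _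
    rw [h0, norm_zero]
    have := hmono (show χ - t ∈ Ici (0:ℝ) by simpa using htχ) (show χ ∈ Ici (0:ℝ) from hχ0)
      (by linarith)
    linarith
  rw [ContinuousLinearMap.norm_id] at hreg
  set δ := ‖A - ContinuousLinearMap.id ℝ X‖ with hδ
  have hδ0 : 0 ≤ δ := norm_nonneg _
  set m := min 1 ‖A‖ - h with hm
  have hm0 : 0 ≤ m := by rw [hm, sub_nonneg]; exact le_min hh1 hA
  have htri : 1 ≤ ‖A‖ + δ := by
    have := norm_sub_le A (A - ContinuousLinearMap.id ℝ X)
    rwa [sub_sub_cancel, ContinuousLinearMap.norm_id] at this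
  have hmδ : 1 - h ≤ m + δ := by
    rcases min_choice 1 ‖A‖ with e | e <;> rw [hm, e] <;> linarith
  obtain ⟨hs0, hωs⟩ := hωinv_right m hm0
  obtain ⟨hp0, hωp⟩ := hωinv_right (m + δ) (by linarith)
  have hχp : χ ≤ ωinv (m + δ) := by
    rw [← hω_mono.le_iff_le (show χ ∈ Ici (0:ℝ) from hχ0) hp0, hωχ, hωp]
    exact hmδ
  have h1 : ω (ωinv (m + δ)) ≤ ω (ωinv m + t) :=
    hmono hp0 (show _ ∈ Ici (0:ℝ) by simp only [mem_Ici]; linarith) (by linarith)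
  have h2 := concave_increment_le_s11 hω_conc (p := χ - t) (q := ωinv m) (t := t) (by linarith)
    (by linarith) ht
  rw [sub_add_cancel] at h2
  linarith

/-- Majorant principle: if the increments of `F` are dominated by those of `G` and `R` is a fixed
point of `G`, the Picard iterates `ρ` of `G` from `0` control those of `F` from `x₀` and their distance to any fixed
point of `F` in the ball of radius `R`. -/
lemma majorant_bounds {X : Type*} [NormedAddCommGroup X] {x₀ : X}
    {F : X → X} {G : ℝ → ℝ} {R : ℝ} (hR : 0 ≤ R) (hG0 : 0 ≤ G 0) (hGR : G R = R)
    (hGmono : MonotoneOn G (Icc 0 R))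
    (hF : ∀ r s : ℝ, 0 ≤ r → r ≤ s → s ≤ R → ∀ x y : X, ‖x - x₀‖ ≤ r → ‖y - x‖ ≤ s - r →
      ‖F y - F x‖ ≤ G s - G r)
    (hF0 : ‖F x₀ - x₀‖ ≤ G 0)
    {u : ℕ → X} (hu0 : u 0 = x₀) (hu : ∀ n, u (n + 1) = F (u n))
    {ρ : ℕ → ℝ} (hρ0 : ρ 0 = 0) (hρ : ∀ n, ρ (n + 1) = G (ρ n)) :
    Monotone ρ ∧ (∀ n, ρ n ∈ Icc 0 R) ∧
    ∀ z, ‖z - x₀‖ ≤ R → F z = z → ∀ n, ‖z - u n‖ ≤ R - ρ n := by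
  have h1 : ∀ n, 0 ≤ ρ n ∧ ρ n ≤ ρ (n + 1) ∧ ρ (n + 1) ≤ R := by
    intro n
    induction n with
    | zero =>
      have := hGmono ⟨le_rfl, hR⟩ ⟨hR, le_rfl⟩ hR
      rw [hρ, hρ0]
      exact ⟨le_rfl, hG0, by linarith⟩
    | succ n ih =>
      obtain ⟨i0, i1, i2⟩ := ih
      have m1 := hGmono ⟨i0, i1.trans i2⟩ ⟨i0.trans i1, i2⟩ i1
      have m2 := hGmono ⟨i0.trans i1, i2⟩ ⟨hR, le_rfl⟩ i2
      rw [← hρ, ← hρ] at m1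
      rw [← hρ, hGR] at m2
      exact ⟨i0.trans i1, m1, m2⟩
  have h2 : ∀ n, ‖u n - x₀‖ ≤ ρ n ∧ ‖u (n + 1) - u n‖ ≤ ρ (n + 1) - ρ n := by
    intro n
    induction n with
    | zero =>
      rw [hu, hu0, hρ, hρ0]
      simpa using hF0
    | succ n ih =>
      obtain ⟨i0, i1⟩ := ih
      constructor
      · have := norm_add_le (u (n + 1) - u n) (u n - x₀)
        rw [sub_add_sub_cancel] at this
        linarith
      · have := hF _ _ (h1 n).1 (h1 n).2.1 (h1 n).2.2 _ _ i0 i1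
        rwa [← hu, ← hu, ← hρ, ← hρ] at this
  refine ⟨monotone_nat_of_le_succ fun n => (h1 n).2.1,
    fun n => ⟨(h1 n).1, (h1 n).2.1.trans (h1 n).2.2⟩, ?_⟩
  intro z hz hFz n
  induction n with
  | zero => rwa [hu0, hρ0, sub_zero]
  | succ n ih =>
    have := hF _ _ (h1 n).1 ((h1 n).2.1.trans (h1 n).2.2) le_rfl _ _ (h2 n).1 ih
    rwa [hFz, hGR, ← hu, ← hρ] at this

/-- uniqueness part of Lemma on the resolvability: Under the same hypotheses,
the equation `f(x) + g(x) = 0` has at most one solution in `B̄(x₀, tstar)`; moreover any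
solution `xss ∈ B̄(x₀, tstar)` satisfies `‖xss - u_n‖ ≤ tstar - ρ_n` for all `n`, where
`u₀ = x₀`, `u_{n+1} = u_n - (f(u_n) + g(u_n))` and `ρ₀ = 0`, `ρ_{n+1} = ρ_n + W(ρ_n)`. -/
theorem uniqueness_of_solution
    {X : Type*} [NormedAddCommGroup X] [NormedSpace ℝ X] [CompleteSpace X]
    (D : Set X) (hD : Convex ℝ D) (x₀ : X) (hx₀ : x₀ ∈ D)
    (f g : X → X) (f' : X → X →L[ℝ] X)
    (hf : ∀ x ∈ D, HasFDerivWithinAt f (f' x) D x)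
    (hfx₀ : f' x₀ = ContinuousLinearMap.id ℝ X)
    (ω ωinv ψ : ℝ → ℝ)
    (hω_cont : ContinuousOn ω (Set.Ici 0))
    (hω_mono : StrictMonoOn ω (Set.Ici 0))
    (hω_conc : ConcaveOn ℝ (Set.Ici 0) ω)
    (hω0 : ω 0 = 0)
    (hω_nonneg : ∀ t, 0 ≤ t → 0 ≤ ω t)
    (hωinv_left : ∀ t, 0 ≤ t → ωinv (ω t) = t)
    (hωinv_right : ∀ s, 0 ≤ s → 0 ≤ ωinv s ∧ ω (ωinv s) = s)
    (h : ℝ) (hh0 : 0 ≤ h) (hh1 : h ≤ 1) (hhf : ∀ x ∈ D, h ≤ ‖f' x‖)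
    (hreg : ∀ x' ∈ D, ∀ x'' ∈ D,
      ωinv (min ‖f' x'‖ ‖f' x''‖ - h + ‖f' x'' - f' x'‖)
        - ωinv (min ‖f' x'‖ ‖f' x''‖ - h) ≤ ‖x'' - x'‖)
    (hψ_mono : MonotoneOn ψ (Set.Ici 0))
    (hψ_nonneg : ∀ t, 0 ≤ t → 0 ≤ ψ t)
    (hg : ∀ t, 0 ≤ t → Metric.closedBall x₀ t ⊆ D →
      ∀ x' ∈ Metric.closedBall x₀ t, ∀ x'' ∈ Metric.closedBall x₀ t,
        ‖g x'' - g x'‖ ≤ ψ t * ‖x'' - x'‖)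
    (a : ℝ) (ha_pos : 0 < a) (ha : ‖f x₀ + g x₀‖ ≤ a)
    (χ : ℝ) (hχdef : χ = ωinv (1 - h))
    (Ω Ψ W : ℝ → ℝ)
    (hΩ : ∀ t, Ω t = ∫ τ in (0:ℝ)..t, ω τ)
    (hΨ : ∀ t, Ψ t = ∫ τ in (0:ℝ)..t, ψ τ)
    (hW : ∀ t, W t = a - Ω χ + Ω (χ - t) - t * h + Ψ t)
    (tstar : ℝ) (htstar_mem : tstar ∈ Set.Icc 0 χ) (htstar_zero : W tstar = 0)
    (htstar_uniq : ∀ s ∈ Set.Icc 0 χ, W s = 0 → s = tstar)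
    (hball : Metric.closedBall x₀ tstar ⊆ D)
    (u : ℕ → X) (hu0 : u 0 = x₀)
    (hurec : ∀ n, u (n + 1) = u n - (f (u n) + g (u n)))
    (ρ : ℕ → ℝ) (hρ0 : ρ 0 = 0)
    (hρrec : ∀ n, ρ (n + 1) = ρ n + W (ρ n)) :
    (∀ x ∈ Metric.closedBall x₀ tstar, ∀ y ∈ Metric.closedBall x₀ tstar,
      f x + g x = 0 → f y + g y = 0 → x = y) ∧
    (∀ xss ∈ Metric.closedBall x₀ tstar, f xss + g xss = 0 →
      ∀ n, ‖xss - u n‖ ≤ tstar - ρ n) := by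
  obtain ⟨hR0, hRχ⟩ := htstar_mem
  have hχ0 : 0 ≤ χ := hR0.trans hRχ
  have hωχ : ω χ = 1 - h := by rw [hχdef]; exact (hωinv_right (1 - h) (by linarith)).2
  set lam : ℝ → ℝ := fun t => 1 - h - ω (χ - t) + ψ t with hlam
  have hlam_mono : MonotoneOn lam (Icc 0 χ) := by
    intro p hp q hq hpq
    have h1 := hω_mono.monotoneOn (show χ - q ∈ Ici (0:ℝ) by simpa using hq.2)
      (show χ - p ∈ Ici (0:ℝ) by simpa using hp.2) (by linarith)
    have h2 := hψ_mono (show p ∈ Ici (0:ℝ) from hp.1) (show q ∈ Ici (0:ℝ) from hq.1) hpq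
    simp only [hlam]
    linarith
  have hcoef : ∀ t ∈ Icc 0 χ, 0 ≤ 1 - h - ω (χ - t) := by
    intro t ht
    have h1 := hω_mono.monotoneOn (show χ - t ∈ Ici (0:ℝ) by simpa using ht.2)
      (show χ ∈ Ici (0:ℝ) from hχ0) (by linarith [ht.1])
    linarith
  have hlam_nn : ∀ t ∈ Icc 0 χ, 0 ≤ lam t := fun t ht =>
    add_nonneg (hcoef t ht) (hψ_nonneg t ht.1)
  have hlam_int : ∀ p q : ℝ, p ∈ Icc 0 χ → q ∈ Icc 0 χ →
      IntervalIntegrable lam MeasureTheory.volume p q := fun p q hp hq =>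
    (hlam_mono.mono (ordConnected_Icc.uIcc_subset hp hq)).intervalIntegrable
  have hG : ∀ t ∈ Icc 0 χ, t + W t = a + ∫ τ in (0:ℝ)..t, lam τ := by
    intro t ht
    have hωint : ∀ p q : ℝ, 0 ≤ p → 0 ≤ q → IntervalIntegrable ω MeasureTheory.volume p q :=
      fun p q hp hq => (hω_cont.mono
        (ordConnected_Ici.uIcc_subset (mem_Ici.2 hp) (mem_Ici.2 hq))).intervalIntegrable
    have hψint : IntervalIntegrable ψ MeasureTheory.volume 0 t :=
      (hψ_mono.mono (ordConnected_Ici.uIcc_subset (mem_Ici.2 le_rfl)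
        (mem_Ici.2 ht.1))).intervalIntegrable
    have hωc : IntervalIntegrable (fun τ => ω (χ - τ)) MeasureTheory.volume 0 t := by
      have := (hωint χ (χ - t) hχ0 (by linarith [ht.2])).comp_sub_left χ
      simpa using this
    have e1 : ∫ τ in (0:ℝ)..t, lam τ =
        (1 - h) * t - (∫ τ in (0:ℝ)..t, ω (χ - τ)) + ∫ τ in (0:ℝ)..t, ψ τ := by
      simp only [hlam]
      rw [intervalIntegral.integral_add (intervalIntegrable_const.sub hωc) hψint,
        intervalIntegral.integral_sub intervalIntegrable_const hωc,
        intervalIntegral.integral_const, smul_eq_mul]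
      ring
    have e2 : ∫ τ in (0:ℝ)..t, ω (χ - τ) = ∫ τ in (χ - t)..χ, ω τ := by
      rw [intervalIntegral.integral_comp_sub_left, sub_zero]
    have e3 := intervalIntegral.integral_add_adjacent_intervals
      (hωint 0 (χ - t) le_rfl (by linarith [ht.2])) (hωint (χ - t) χ (by linarith [ht.2]) hχ0)
    rw [hW, hΩ, hΩ, hΨ, e1, e2, ← e3]
    ring
  have hGsub : ∀ r s : ℝ, r ∈ Icc 0 χ → s ∈ Icc 0 χ →
      (s + W s) - (r + W r) = ∫ τ in r..s, lam τ := by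
    intro r s hr hs
    have := intervalIntegral.integral_add_adjacent_intervals
      (hlam_int 0 r ⟨le_rfl, hχ0⟩ hr) (hlam_int r s hr hs)
    rw [hG r hr, hG s hs]
    linarith
  have hW0 : W 0 = a := by simpa using hG 0 ⟨le_rfl, hχ0⟩
  have hsub : Icc 0 tstar ⊆ Icc 0 χ := Icc_subset_Icc_right hRχ
  have hGmono : MonotoneOn (fun t => t + W t) (Icc 0 tstar) := by
    intro r hr s hs hrs
    have h1 := hGsub r s (hsub hr) (hsub hs)
    have h2 : 0 ≤ ∫ τ in r..s, lam τ := intervalIntegral.integral_nonneg hrs fun τ hτ =>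
      hlam_nn τ ⟨hr.1.trans hτ.1, hτ.2.trans (hsub hs).2⟩
    show r + W r ≤ s + W s
    linarith
  have hLip : ∀ t ∈ Icc 0 tstar, ∀ x ∈ Metric.closedBall x₀ t, ∀ y ∈ Metric.closedBall x₀ t,
      ‖(y - (f y + g y)) - (x - (f x + g x))‖ ≤ lam t * ‖y - x‖ := by
    intro t ht x hx y hy
    have hBD : Metric.closedBall x₀ t ⊆ D := (Metric.closedBall_subset_closedBall ht.2).trans hball
    have h1 : ‖(f y - y) - (f x - x)‖ ≤ (1 - h - ω (χ - t)) * ‖y - x‖ := by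
      refine (convex_closedBall x₀ t).norm_image_sub_le_of_norm_hasFDerivWithin_le
        (f := fun z => f z - z) (f' := fun z => f' z - ContinuousLinearMap.id ℝ X) ?_ ?_ hx hy
      · intro z hz
        exact ((hf z (hBD hz)).mono hBD).sub (hasFDerivWithinAt_id z _)
      · intro z hz
        have hr := hreg x₀ hx₀ z (hBD hz)
        rw [hfx₀] at hr
        exact norm_deriv_sub_id_le hω_mono hω_conc hωinv_right hh1 (hhf z (hBD hz)) hχdef ht.1
          (hsub ht).2 (hr.trans (mem_closedBall_iff_norm.1 hz))
    have h2 := hg t ht.1 hBD x hx y hy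
    have h3 : (y - (f y + g y)) - (x - (f x + g x)) =
        -(((f y - y) - (f x - x)) + (g y - g x)) := by abel
    rw [h3, norm_neg]
    have h4 := norm_add_le ((f y - y) - (f x - x)) (g y - g x)
    simp only [hlam, add_mul]
    linarith
  obtain ⟨hρmono, hρmem, hbound⟩ := majorant_bounds (x₀ := x₀) (F := fun x => x - (f x + g x))
    (G := fun t => t + W t) (R := tstar) hR0 (by simp only [zero_add, hW0]; exact ha_pos.le)
    (by simp only [htstar_zero, add_zero]) hGmono
    (by
      intro r s hr hrs hs x y hx hxy
      show _ ≤ (s + W s) - (r + W r)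
      rw [hGsub r s ⟨hr, hrs.trans (hs.trans hRχ)⟩ ⟨hr.trans hrs, hs.trans hRχ⟩]
      exact norm_sub_le_integral (F := fun x => x - (f x + g x)) (hlam_mono.mono hsub)
        (fun t ht => hlam_nn t (hsub ht)) hLip hr hrs hs hx hxy)
    (by
      simp only [zero_add, hW0]
      rwa [show x₀ - (f x₀ + g x₀) - x₀ = -(f x₀ + g x₀) by abel, norm_neg])
    hu0 hurec hρ0 hρrec
  have hsol : ∀ z ∈ Metric.closedBall x₀ tstar, f z + g z = 0 → ∀ n, ‖z - u n‖ ≤ tstar - ρ n :=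
    fun z hz hfz => hbound z (mem_closedBall_iff_norm.1 hz) (by simp only [hfz, sub_zero])
  refine ⟨?_, hsol⟩
  have hρlim : Tendsto ρ atTop (𝓝 tstar) := by
    have hL := tendsto_atTop_ciSup hρmono ⟨tstar, by rintro _ ⟨n, rfl⟩; exact (hρmem n).2⟩
    set L := ⨆ n, ρ n
    have hLmem : L ∈ Icc 0 tstar := isClosed_Icc.mem_of_tendsto hL (Eventually.of_forall hρmem)
    have hGcont : ContinuousOn (fun t => t + W t) (Icc 0 tstar) := by
      have h1 : ContinuousOn (fun t => a + ∫ τ in (0:ℝ)..t, lam τ) (Icc 0 tstar) := by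
        refine continuousOn_const.add ?_
        have h2 := intervalIntegral.continuousOn_primitive_interval' (b₁ := 0) (b₂ := tstar) (a := 0)
          (hlam_int 0 tstar ⟨le_rfl, hχ0⟩ ⟨hR0, hRχ⟩) left_mem_uIcc
        rwa [uIcc_of_le hR0] at h2
      exact h1.congr fun t ht => hG t (hsub ht)
    have h3 : Tendsto (fun n => ρ n + W (ρ n)) atTop (𝓝 (L + W L)) :=
      (hGcont L hLmem).tendsto.comp
        (tendsto_nhdsWithin_iff.2 ⟨hL, Eventually.of_forall hρmem⟩)
    have h4 : Tendsto (fun n => ρ n + W (ρ n)) atTop (𝓝 L) := by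
      have := (tendsto_add_atTop_iff_nat 1).2 hL
      simpa only [hρrec] using this
    have h5 := tendsto_nhds_unique h3 h4
    have h6 : L = tstar := htstar_uniq L (hsub hLmem) (by linarith)
    rwa [h6] at hL
  have hulim : ∀ z ∈ Metric.closedBall x₀ tstar, f z + g z = 0 → Tendsto u atTop (𝓝 z) := by
    intro z hz hfz
    rw [tendsto_iff_norm_sub_tendsto_zero]
    refine squeeze_zero (fun _ => norm_nonneg _) (g := fun n => tstar - ρ n) (fun n => ?_) ?_
    · rw [norm_sub_rev]; exact hsol z hz hfz n
    · simpa using hρlim.const_sub tstar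
  intro x hx y hy hfx hfy
  exact tendsto_nhds_unique (hulim x hx hfx) (hulim y hy hfy)
end
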